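/- Every polynomial is a (p,q)-Bézier curve: let n ≥ 1, let p, q be reals with 0 < q < p, let S be a real polynomial of degree at most n, and let s : ℝ^n → ℝ be the (p,q)-blossom of S. For k = 0, …, n set P_k = s(0, …, 0, p^{n−1}, p^{n−2}q, …, p^{n−k}q^{k−1}), where the first n−k arguments are 0 and the remaining k arguments are p^{n−1}, p^{n−2}q, …, p^{n−k}q^{k−1}. Then S(t) = Σ_{k=0}^{n} P_k B_k^n(t;p,q) for all real t. -/

import Mathlib

/-- The (p,q)-integer `[n]_{p,q} = Σ_{j=0}^{n-1} p^{n-1-j} q^j`. -/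
noncomputable def pqInt (p q : ℝ) (n : ℕ) : ℝ :=
  ∑ j ∈ Finset.range n, p ^ (n - 1 - j) * q ^ j

/-- The (p,q)-factorial `[n]_{p,q}! = ∏_{j=1}^{n} [j]_{p,q}`. -/
noncomputable def pqFact (p q : ℝ) : ℕ → ℝ
  | 0 => 1
  | n + 1 => pqFact p q n * pqInt p q (n + 1)

/-- The (p,q)-binomial coefficient `[n choose k]_{p,q}`. -/
noncomputable def pqBinom (p q : ℝ) (n k : ℕ) : ℝ :=
  pqFact p q n / (pqFact p q k * pqFact p q (n - k))

/-- The (p,q)-Bernstein basis function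
`B_k^n(t;p,q) = p^{k(k-1)/2 - n(n-1)/2} [n choose k]_{p,q} t^k ∏_{s=0}^{n-k-1} (p^s - q^s t)`. -/
noncomputable def pqBernstein (p q : ℝ) (n k : ℕ) (t : ℝ) : ℝ :=
  p ^ (k * (k - 1) / 2) / p ^ (n * (n - 1) / 2) * pqBinom p q n k * t ^ k *
    ∏ s ∈ Finset.range (n - k), (p ^ s - q ^ s * t)

/-- The `k`-th elementary symmetric polynomial in `n` variables:
`φ_{n,k}(u_1, …, u_n) = Σ_{1 ≤ i_1 < … < i_k ≤ n} u_{i_1} ⋯ u_{i_k}`. -/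
noncomputable def esymmEval (n k : ℕ) (u : Fin n → ℝ) : ℝ :=
  ∑ S ∈ Finset.powersetCard k (Finset.univ : Finset (Fin n)), ∏ i ∈ S, u i

/-- A function `f : ℝ^n → ℝ` is symmetric if it is invariant under all permutations
of its arguments. -/
def IsSymmetricFn (n : ℕ) (f : (Fin n → ℝ) → ℝ) : Prop :=
  ∀ (σ : Equiv.Perm (Fin n)) (u : Fin n → ℝ), f (fun i => u (σ i)) = f u

/-- A function `f : ℝ^n → ℝ` is multiaffine if, fixing all variables except the `j`-th,
the resulting one-variable function is affine (degree at most one). -/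
def IsMultiaffine (n : ℕ) (f : (Fin n → ℝ) → ℝ) : Prop :=
  ∀ (j : Fin n) (u : Fin n → ℝ), ∃ a b : ℝ,
    ∀ x : ℝ, f (Function.update u j x) = a * x + b

/-!
Write `a i = p ^ (n - 1) * (q / p) ^ i` for the nodes. The identity
`a m * t = (1 - (q / p) ^ (m - k) * t) * 0 + (q / p) ^ (m - k) * t * a k` lets multiaffinity trade
the argument `a m * t` of the blossom for `0` or for `a k`, where `a 0, …, a (k - 1)` are the nodes
already produced. Starting from the diagonal and treating `m = 0, …, n - 1` in turn, as in de
Casteljau's algorithm, one reaches the control points; the weights obey the same Pascal-type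
recurrence as the Bernstein basis.
-/

open Finset Function

section PQCalculus

lemma pqInt_add (p q : ℝ) (m n : ℕ) :
    pqInt p q (m + n) = p ^ n * pqInt p q m + q ^ m * pqInt p q n := by
  simp only [pqInt, sum_range_add, mul_sum]
  congr 1 <;> refine sum_congr rfl fun j hj ↦ ?_
  · have hj : j < m := mem_range.1 hj
    rw [show m + n - 1 - j = n + (m - 1 - j) by omega, pow_add, mul_assoc]
  · rw [show m + n - 1 - (m + j) = n - 1 - j by omega, pow_add, mul_left_comm]

lemma pqFact_succ (p q : ℝ) (n : ℕ) :
    pqFact p q (n + 1) = pqFact p q n * pqInt p q (n + 1) := rfl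

variable {p q : ℝ}

lemma pqInt_succ_pos (hp : 0 < p) (hq : 0 < q) (n : ℕ) : 0 < pqInt p q (n + 1) :=
  sum_pos (fun _ _ ↦ by positivity) nonempty_range_add_one

lemma pqFact_pos (hp : 0 < p) (hq : 0 < q) (n : ℕ) : 0 < pqFact p q n := by
  induction n with
  | zero => exact one_pos
  | succ n ih => exact mul_pos ih (pqInt_succ_pos hp hq n)

lemma pqFact_ne_zero_of_le {k n : ℕ} (hkn : k ≤ n) (hn : pqFact p q n ≠ 0) :
    pqFact p q k ≠ 0 := by
  induction hkn with
  | refl => exact hn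
  | step _ ih => exact ih (left_ne_zero_of_mul hn)

lemma pqBinom_zero_right {n : ℕ} (hn : pqFact p q n ≠ 0) : pqBinom p q n 0 = 1 := by
  simp [pqBinom, pqFact, hn]

lemma pqBinom_self {n : ℕ} (hn : pqFact p q n ≠ 0) : pqBinom p q n n = 1 := by
  simp [pqBinom, pqFact, hn]

lemma pqBinom_succ_succ {n k : ℕ} (hkn : k < n) (hn : pqFact p q n ≠ 0) :
    pqBinom p q (n + 1) (k + 1) =
      p ^ (k + 1) * pqBinom p q n (k + 1) + q ^ (n - k) * pqBinom p q n k := by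
  obtain ⟨d, rfl⟩ := Nat.exists_eq_add_of_lt hkn
  have hk : pqFact p q (k + 1) ≠ 0 := pqFact_ne_zero_of_le (by omega) hn
  have hd : pqFact p q (d + 1) ≠ 0 := pqFact_ne_zero_of_le (by omega) hn
  have hsplit : pqInt p q (k + d + 1 + 1) =
      p ^ (k + 1) * pqInt p q (d + 1) + q ^ (d + 1) * pqInt p q (k + 1) := by
    rw [← pqInt_add, show d + 1 + (k + 1) = k + d + 1 + 1 by omega]
  simp only [pqBinom, show k + d + 1 + 1 - (k + 1) = d + 1 by omega,
    show k + d + 1 - (k + 1) = d by omega, show k + d + 1 - k = d + 1 by omega,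
    pqFact_succ p q (k + d + 1), hsplit]
  simp only [pqFact_succ, mul_ne_zero_iff] at hk hd ⊢
  obtain ⟨hk, hk'⟩ := hk
  obtain ⟨hd, hd'⟩ := hd
  field_simp

end PQCalculus

section BernsteinRecurrence

variable {p q : ℝ} {m : ℕ}

lemma pqBernstein_self (hp : p ≠ 0) (hm : pqFact p q m ≠ 0) (t : ℝ) :
    pqBernstein p q m m t = t ^ m := by
  simp [pqBernstein, pqBinom_self hm, hp]

lemma pqBernstein_succ_zero (hp : p ≠ 0) (hm : pqFact p q (m + 1) ≠ 0) (t : ℝ) :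
    pqBernstein p q (m + 1) 0 t = (1 - (q / p) ^ m * t) * pqBernstein p q m 0 t := by
  simp only [pqBernstein, pqBinom_zero_right hm,
    pqBinom_zero_right (pqFact_ne_zero_of_le m.le_succ hm), Nat.triangle_succ, Nat.sub_zero,
    prod_range_succ, pow_add, div_pow]
  generalize ∏ s ∈ range m, (p ^ s - q ^ s * t) = Q
  field_simp

lemma pqBernstein_succ_succ {k : ℕ} (hp : p ≠ 0) (hkm : k < m) (hm : pqFact p q m ≠ 0) (t : ℝ) :
    pqBernstein p q (m + 1) (k + 1) t =
      (1 - (q / p) ^ (m - (k + 1)) * t) * pqBernstein p q m (k + 1) t +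
        (q / p) ^ (m - k) * t * pqBernstein p q m k t := by
  simp only [pqBernstein, pqBinom_succ_succ hkm hm]
  obtain ⟨d, rfl⟩ := Nat.exists_eq_add_of_lt hkm
  simp only [Nat.triangle_succ, show k + d + 1 + 1 - (k + 1) = d + 1 by omega,
    show k + d + 1 - (k + 1) = d by omega, show k + d + 1 - k = d + 1 by omega,
    prod_range_succ, pow_add, div_pow]
  field_simp

lemma sum_mul_pqBernstein_succ (hp : p ≠ 0) (hm : pqFact p q (m + 1) ≠ 0) (t : ℝ) (P : ℕ → ℝ) :
    ∑ k ∈ range (m + 2), P k * pqBernstein p q (m + 1) k t =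
      ∑ k ∈ range (m + 1), ((1 - (q / p) ^ (m - k) * t) * P k + (q / p) ^ (m - k) * t * P (k + 1)) *
        pqBernstein p q m k t := by
  have hm' : pqFact p q m ≠ 0 := pqFact_ne_zero_of_le m.le_succ hm
  have hmiddle : ∑ k ∈ range m, P (k + 1) * pqBernstein p q (m + 1) (k + 1) t =
      ∑ k ∈ range m, (1 - (q / p) ^ (m - (k + 1)) * t) * P (k + 1) * pqBernstein p q m (k + 1) t +
        ∑ k ∈ range m, (q / p) ^ (m - k) * t * P (k + 1) * pqBernstein p q m k t := by
    rw [← sum_add_distrib]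
    refine sum_congr rfl fun k hk ↦ ?_
    rw [pqBernstein_succ_succ hp (mem_range.1 hk) hm']
    ring
  simp only [add_mul, sum_add_distrib]
  rw [sum_range_succ, sum_range_succ', hmiddle, pqBernstein_succ_zero hp hm,
    pqBernstein_self hp hm, sum_range_succ' _ m, sum_range_succ _ m, pqBernstein_self hp hm',
    Nat.sub_zero, Nat.sub_self]
  ring

end BernsteinRecurrence

lemma IsMultiaffine.map_update_affineCombination {n : ℕ} {f : (Fin n → ℝ) → ℝ}
    (hf : IsMultiaffine n f) (u : Fin n → ℝ) (j : Fin n) (x y c : ℝ) :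
    f (update u j ((1 - c) * x + c * y)) =
      (1 - c) * f (update u j x) + c * f (update u j y) := by
  obtain ⟨a, b, hab⟩ := hf j u
  simp only [hab]
  ring

lemma IsSymmetricFn.map_append_comm {n k : ℕ} {f : (Fin n → ℝ) → ℝ} (hf : IsSymmetricFn n f)
    (hkn : k ≤ n) (a b : ℕ → ℝ) :
    f (fun i ↦ if (i : ℕ) < k then a i else b (i - k)) =
      f (fun i ↦ if (i : ℕ) < n - k then b i else a (i - (n - k))) := by
  obtain ⟨d, rfl⟩ := Nat.exists_eq_add_of_le hkn
  rw [← hf ((finCongr (add_comm k d)).trans finAddFlip), Nat.add_sub_cancel_left]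
  congr 1
  ext i
  obtain ⟨i, rfl⟩ := (finCongr (add_comm d k)).surjective i
  refine Fin.addCases (fun j ↦ ?_) (fun j ↦ ?_) i <;> simp

section DeCasteljau

variable {n m k : ℕ}

/-- The arguments of a blossom in `n` variables at stage `m` of de Casteljau's algorithm for the
geometric nodes `c * r ^ i`: of the first `m` diagonal arguments `c * r ^ i * t`, `k` have been
replaced by nodes, which are listed first, and the other `m - k` by zeros. -/
def deCasteljauArg (n : ℕ) (c r t : ℝ) (m k : ℕ) : Fin n → ℝ := fun i ↦
  if (i : ℕ) < k then c * r ^ (i : ℕ) else if (i : ℕ) < m then 0 else c * r ^ (i : ℕ) * t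

lemma deCasteljauArg_zero_zero (c r t : ℝ) :
    deCasteljauArg n c r t 0 0 = fun i : Fin n ↦ c * r ^ (i : ℕ) * t := by
  ext
  simp [deCasteljauArg]

lemma deCasteljauArg_self (c r t : ℝ) :
    deCasteljauArg n c r t n k = fun i : Fin n ↦ if (i : ℕ) < k then c * r ^ (i : ℕ) else 0 := by
  ext
  simp [deCasteljauArg]

lemma deCasteljauArg_eq_update (c r t : ℝ) (hm : m < n) (hkm : k ≤ m) :
    deCasteljauArg n c r t m k =
      update (deCasteljauArg n c r t (m + 1) k) ⟨m, hm⟩ (c * r ^ m * t) := by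
  ext i
  simp only [deCasteljauArg, update_apply, Fin.ext_iff]
  grind

lemma deCasteljauArg_succ_eq_update_zero (c r t : ℝ) (hm : m < n) (hkm : k ≤ m) :
    deCasteljauArg n c r t (m + 1) k =
      update (deCasteljauArg n c r t (m + 1) k) ⟨m, hm⟩ 0 := by
  simp [deCasteljauArg, hkm.not_gt]

lemma deCasteljauArg_succ_succ_swap (c r t : ℝ) (hm : m < n) (hkm : k ≤ m) :
    (fun i ↦ deCasteljauArg n c r t (m + 1) (k + 1)
        (Equiv.swap ⟨k, hkm.trans_lt hm⟩ ⟨m, hm⟩ i)) =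
      update (deCasteljauArg n c r t (m + 1) k) ⟨m, hm⟩ (c * r ^ k) := by
  ext i
  simp only [deCasteljauArg, update_apply, Equiv.swap_apply_def, Fin.ext_iff]
  grind

variable {s : (Fin n → ℝ) → ℝ}

lemma map_deCasteljauArg (hsym : IsSymmetricFn n s) (haff : IsMultiaffine n s) (c r t : ℝ)
    (hm : m < n) (hkm : k ≤ m) :
    s (deCasteljauArg n c r t m k) =
      (1 - r ^ (m - k) * t) * s (deCasteljauArg n c r t (m + 1) k) +
        r ^ (m - k) * t * s (deCasteljauArg n c r t (m + 1) (k + 1)) := by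
  have harg : c * r ^ m * t =
      (1 - r ^ (m - k) * t) * 0 + r ^ (m - k) * t * (c * r ^ k) := by
    rw [← pow_sub_mul_pow r hkm]
    ring
  rw [deCasteljauArg_eq_update c r t hm hkm, harg, haff.map_update_affineCombination,
    ← deCasteljauArg_succ_eq_update_zero c r t hm hkm,
    ← deCasteljauArg_succ_succ_swap c r t hm hkm, hsym]

theorem map_diagonal_eq_sum_deCasteljauArg {p q : ℝ} (hp : p ≠ 0) (hsym : IsSymmetricFn n s)
    (haff : IsMultiaffine n s) (c t : ℝ) (hmn : m ≤ n) (hm : pqFact p q m ≠ 0) :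
    s (fun i ↦ c * (q / p) ^ (i : ℕ) * t) =
      ∑ k ∈ range (m + 1), s (deCasteljauArg n c (q / p) t m k) * pqBernstein p q m k t := by
  induction m with
  | zero => simp [pqBernstein_self hp hm, deCasteljauArg_zero_zero]
  | succ m ih =>
    rw [ih (by omega) (pqFact_ne_zero_of_le m.le_succ hm), sum_mul_pqBernstein_succ hp hm]
    refine sum_congr rfl fun k hk ↦ ?_
    rw [map_deCasteljauArg hsym haff c (q / p) t hmn (mem_range_succ_iff.1 hk)]

end DeCasteljau

lemma pow_sub_mul_pow_eq_mul_div_pow {K : Type*} [Field K] {p : K} (hp : p ≠ 0) (q : K)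
    {i N : ℕ} (hi : i ≤ N) :
    p ^ (N - i) * q ^ i = p ^ N * (q / p) ^ i := by
  rw [div_pow, pow_sub₀ p hp hi]
  ring

theorem pq_polynomial_is_bezier_general {n : ℕ} {p q : ℝ} (hp : p ≠ 0) (hn : pqFact p q n ≠ 0)
    {s : (Fin n → ℝ) → ℝ} (hsym : IsSymmetricFn n s) (haff : IsMultiaffine n s) (t : ℝ) :
    s (fun i ↦ p ^ (n - 1 - (i : ℕ)) * q ^ (i : ℕ) * t) = ∑ k ∈ range (n + 1),
      s (fun i : Fin n ↦ if (i : ℕ) < n - k then 0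
          else p ^ (n - 1 - ((i : ℕ) - (n - k))) * q ^ ((i : ℕ) - (n - k))) *
        pqBernstein p q n k t := by
  have hnode (i : ℕ) (hi : i < n) : p ^ (n - 1 - i) * q ^ i = p ^ (n - 1) * (q / p) ^ i :=
    pow_sub_mul_pow_eq_mul_div_pow hp q (by omega)
  calc s (fun i ↦ p ^ (n - 1 - (i : ℕ)) * q ^ (i : ℕ) * t)
    _ = s (fun i ↦ p ^ (n - 1) * (q / p) ^ (i : ℕ) * t) := by simp only [hnode _ (Fin.is_lt _)]
    _ = ∑ k ∈ range (n + 1),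
          s (deCasteljauArg n (p ^ (n - 1)) (q / p) t n k) * pqBernstein p q n k t :=
      map_diagonal_eq_sum_deCasteljauArg hp hsym haff _ t le_rfl hn
    _ = _ := by
      refine sum_congr rfl fun k hk ↦ ?_
      rw [← hsym.map_append_comm (mem_range_succ_iff.1 hk)
        (fun i ↦ p ^ (n - 1 - i) * q ^ i) fun _ ↦ 0]
      simp only [deCasteljauArg_self, hnode _ (Fin.is_lt _)]

/-- every polynomial of degree at most `n` is a (p,q)-Bézier curve whose
control points are the (p,q)-blossom values
`P_k = s(0, …, 0, p^{n-1}, p^{n-2}q, …, p^{n-k}q^{k-1})` (first `n-k` arguments zero). -/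
theorem pq_polynomial_is_bezier (n : ℕ) (hn : 1 ≤ n)
    (p q : ℝ) (h0 : 0 < q) (hqp : q < p)
    (S : Polynomial ℝ) (hS : S.natDegree ≤ n)
    (s : (Fin n → ℝ) → ℝ)
    (hsym : IsSymmetricFn n s) (haff : IsMultiaffine n s)
    (hdiag : ∀ t : ℝ, s (fun i => p ^ (n - 1 - (i : ℕ)) * q ^ (i : ℕ) * t) = S.eval t) :
    ∀ t : ℝ, S.eval t = ∑ k ∈ Finset.range (n + 1),
      s (fun i : Fin n => if (i : ℕ) < n - k then 0
          else p ^ (n - 1 - ((i : ℕ) - (n - k))) * q ^ ((i : ℕ) - (n - k))) *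
        pqBernstein p q n k t := by
  intro t
  have hp : 0 < p := h0.trans hqp
  rw [← hdiag, pq_polynomial_is_bezier_general hp.ne' (pqFact_pos hp h0 n).ne' hsym haff]
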